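/- arXiv:1902.01751 — 2 statements merged into one kernel-verified Lean document; each statement's English description precedes it below -/
import Mathlib

section
/- For the weight a = (3,4,8) (the weight of the W₁₃-singularity), there exist 3×3 matrices C and D with non-negative integer entries such that |det D| = 1, B_a = C·D, (3,4,8) = (1,1,1)·D, f_C(x,y,z) = x⁴ + y²z + xz² after a permutation of the variables (x,y,z) (the normal form of the strange dual singularity S₁₁), and f_C has an isolated critical point at the origin of ℂ³ (all partial derivatives of f_C vanish at 0, and there is a punctured neighborhood of 0 containing no critical point of f_C). -/
open Matrix BigOperators

noncomputable section

/-- `f_C(x,y,z) = Σ_{i=1}^{3} x^{c_{i1}} y^{c_{i2}} z^{c_{i3}}` for a 3×3 matrix `C`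
with non-negative integer entries. -/
def fC (C : Matrix (Fin 3) (Fin 3) ℕ) : (Fin 3 → ℂ) → ℂ :=
  fun v => ∑ i : Fin 3, ∏ j : Fin 3, v j ^ C i j

/-- `φ_D(u₁,u₂,u₃) = (u₁^{d_{i1}} u₂^{d_{i2}} u₃^{d_{i3}})_{i=1}^{3}`. -/
def phiD (D : Matrix (Fin 3) (Fin 3) ℕ) : (Fin 3 → ℂ) → (Fin 3 → ℂ) :=
  fun u i => ∏ j : Fin 3, u j ^ D i j

/-- The matrix `B_a` with rows `(a₁+1,a₂,a₃)`, `(a₁,a₂+1,a₃)`, `(a₁,a₂,a₃+1)`. -/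
def Bmat (a : Fin 3 → ℕ) : Matrix (Fin 3) (Fin 3) ℕ :=
  fun i j => a j + if i = j then 1 else 0

/-- `G_a(u₁,u₂,u₃) = u₁^{a₁+1}u₂^{a₂}u₃^{a₃} + u₁^{a₁}u₂^{a₂+1}u₃^{a₃} + u₁^{a₁}u₂^{a₂}u₃^{a₃+1}`. -/
def Ga (a : Fin 3 → ℕ) : (Fin 3 → ℂ) → ℂ :=
  fun u => u 0 ^ (a 0 + 1) * u 1 ^ a 1 * u 2 ^ a 2
         + u 0 ^ a 0 * u 1 ^ (a 1 + 1) * u 2 ^ a 2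
         + u 0 ^ a 0 * u 1 ^ a 1 * u 2 ^ (a 2 + 1)

/-- `H_a(u₁,u₂,u₃) = u₁^{a₁}u₂^{a₂}u₃^{a₃}`. -/
def Ha (a : Fin 3 → ℕ) : (Fin 3 → ℂ) → ℂ :=
  fun u => u 0 ^ a 0 * u 1 ^ a 1 * u 2 ^ a 2

/-- Determinant of a matrix of natural numbers, computed over `ℤ`. -/
def detZ (M : Matrix (Fin 3) (Fin 3) ℕ) : ℤ :=
  (M.map (fun n : ℕ => (n : ℤ))).det

/-- `f` has an isolated critical point at the origin of `ℂ³`: the derivative of `f`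
vanishes at `0`, and there is a punctured neighborhood of `0` containing no critical
point of `f`. -/
def IsolatedCriticalAtZero (f : (Fin 3 → ℂ) → ℂ) : Prop :=
  fderiv ℂ f 0 = 0 ∧
  ∃ ε : ℝ, ε > 0 ∧ ∀ p : Fin 3 → ℂ, p ≠ 0 → ‖p‖ < ε → fderiv ℂ f p ≠ 0

/-!
In the variable order `(x, z, y)` the polynomial `x⁴ + x z² + z y²` is of chain type: each of its
monomials after the first involves one new variable and the previous one to the first power. A zero
of the last partial derivative of such a polynomial has one of its last two coordinates equal to
zero, and the other two equations then propagate this to all coordinates, so the origin is the only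
critical point. The exponent matrix `C` and `B_a` both have determinant `16`, and `D = C⁻¹ B_a`
turns out to have non-negative integer entries.
-/

theorem fderiv_prod_pow_apply_single {𝕜 ι : Type*} [NontriviallyNormedField 𝕜] [Fintype ι]
    [DecidableEq ι] (m : ι → ℕ) (p : ι → 𝕜) (j : ι) :
    fderiv 𝕜 (fun v : ι → 𝕜 => ∏ i, v i ^ m i) p (Pi.single j 1) =
      (∏ i ∈ Finset.univ.erase j, p i ^ m i) * (m j * p j ^ (m j - 1)) := by
  have hpow (i : ι) := (hasFDerivAt_apply (𝕜 := 𝕜) i p).pow (m i)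
  have hprod := (HasFDerivAt.finsetProd fun i (_ : i ∈ Finset.univ) => hpow i).fderiv
  rw [hprod]
  simp [Pi.single_apply]

theorem fderiv_fC_apply_single (C : Matrix (Fin 3) (Fin 3) ℕ) (p : Fin 3 → ℂ) (j : Fin 3) :
    fderiv ℂ (fC C) p (Pi.single j 1) =
      ∑ i, (∏ k ∈ Finset.univ.erase j, p k ^ C i k) * (C i j * p j ^ (C i j - 1)) := by
  have hsum : fderiv ℂ (fC C) p = ∑ i, fderiv ℂ (fun v => ∏ k, v k ^ C i k) p :=
    fderiv_fun_sum fun i _ => by fun_prop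
  simp only [hsum, _root_.sum_apply, fderiv_prod_pow_apply_single]

theorem fderiv_eq_zero_iff_forall_apply_single {𝕜 ι F : Type*} [NontriviallyNormedField 𝕜]
    [Finite ι] [DecidableEq ι] [NormedAddCommGroup F] [NormedSpace 𝕜 F] {f : (ι → 𝕜) → F}
    {p : ι → 𝕜} :
    fderiv 𝕜 f p = 0 ↔ ∀ j, fderiv 𝕜 f p (Pi.single j 1) = 0 := by
  have := Fintype.ofFinite ι
  refine ⟨fun h j => by simp [h], fun h => ?_⟩
  exact ContinuousLinearMap.coe_injective ((Pi.basisFun 𝕜 ι).ext fun j => by simpa using h j)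

theorem isolatedCriticalAtZero_of_fderiv_eq_zero_iff {f : (Fin 3 → ℂ) → ℂ}
    (h : ∀ p, fderiv ℂ f p = 0 ↔ p = 0) : IsolatedCriticalAtZero f :=
  ⟨(h 0).mpr rfl, 1, one_pos, fun p hp _ => mt (h p).mp hp⟩

section Chain

/-- The exponent matrix of the chain type polynomial `x ^ a + x * y ^ b + y * z ^ c`. The
normal form of `S₁₁` is the case `(4, 2, 2)` with the last two variables exchanged. -/
def chainMatrix (a b c : ℕ) : Matrix (Fin 3) (Fin 3) ℕ :=
  !![a, 0, 0; 1, b, 0; 0, 1, c]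

theorem fC_chainMatrix (a b c : ℕ) (v : Fin 3 → ℂ) :
    fC (chainMatrix a b c) v = v 0 ^ a + v 0 * v 1 ^ b + v 1 * v 2 ^ c := by
  simp [fC, chainMatrix, Fin.sum_univ_three, Fin.prod_univ_three]

variable {a b c : ℕ}

theorem fderiv_fC_chainMatrix_eq_zero_iff {p : Fin 3 → ℂ} :
    fderiv ℂ (fC (chainMatrix a b c)) p = 0 ↔
      a * p 0 ^ (a - 1) + p 1 ^ b = 0 ∧
      b * p 0 * p 1 ^ (b - 1) + p 2 ^ c = 0 ∧
      c * p 1 * p 2 ^ (c - 1) = 0 := by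
  have erase_zero : (Finset.univ.erase 0 : Finset (Fin 3)) = {1, 2} := by decide
  have erase_one : (Finset.univ.erase 1 : Finset (Fin 3)) = {0, 2} := by decide
  have erase_two : (Finset.univ.erase 2 : Finset (Fin 3)) = {0, 1} := by decide
  simp [fderiv_eq_zero_iff_forall_apply_single, fderiv_fC_apply_single, Fin.forall_fin_succ,
    Fin.sum_univ_three, erase_zero, erase_one, erase_two, chainMatrix, mul_left_comm, mul_assoc]

theorem chain_partials_eq_zero_iff {R : Type*} [Semiring R] [NoZeroDivisors R] [CharZero R]
    (ha : 2 ≤ a) (hb : b ≠ 0) (hc : c ≠ 0) {x y z : R} :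
    (a * x ^ (a - 1) + y ^ b = 0 ∧ b * x * y ^ (b - 1) + z ^ c = 0 ∧ c * y * z ^ (c - 1) = 0) ↔
      x = 0 ∧ y = 0 ∧ z = 0 := by
  have ha₀ : a ≠ 0 := by lia
  have ha₁ : a - 1 ≠ 0 := by lia
  constructor
  · rintro ⟨hx, hy, hz⟩
    have y_eq_zero_of_x (h : x = 0) : y = 0 := by simpa [h, ha₁, hb] using hx
    have x_eq_zero_of_y (h : y = 0) : x = 0 := by simpa [h, ha₀, ha₁, hb] using hx
    have z_eq_zero_of_x (h : x = 0) : z = 0 := by simpa [h, hc] using hy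
    have y_or_z_eq_zero : y = 0 ∨ z = 0 := by
      simpa [hc] using (mul_eq_zero.mp hz).imp_right eq_zero_of_pow_eq_zero
    have x_eq_zero : x = 0 := by
      rcases y_or_z_eq_zero with y_eq_zero | z_eq_zero
      · exact x_eq_zero_of_y y_eq_zero
      · have x_or_y_eq_zero : x = 0 ∨ y = 0 := by
          have : x = 0 ∨ y ^ (b - 1) = 0 := by simpa [z_eq_zero, hb, hc] using hy
          exact this.imp_right eq_zero_of_pow_eq_zero
        exact x_or_y_eq_zero.elim id x_eq_zero_of_y
    exact ⟨x_eq_zero, y_eq_zero_of_x x_eq_zero, z_eq_zero_of_x x_eq_zero⟩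
  · rintro ⟨rfl, rfl, rfl⟩
    simp [ha₁, hb, hc]

theorem isolatedCriticalAtZero_fC_chainMatrix (ha : 2 ≤ a) (hb : b ≠ 0) (hc : c ≠ 0) :
    IsolatedCriticalAtZero (fC (chainMatrix a b c)) := by
  refine isolatedCriticalAtZero_of_fderiv_eq_zero_iff fun p => ?_
  rw [fderiv_fC_chainMatrix_eq_zero_iff, chain_partials_eq_zero_iff ha hb hc]
  simp [funext_iff, Fin.forall_fin_succ]

end Chain

theorem stmt_13 :
    ∃ C D : Matrix (Fin 3) (Fin 3) ℕ,
      |detZ D| = 1 ∧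
      Bmat ![3, 4, 8] = C * D ∧
      (∀ j, (∑ i : Fin 3, D i j) = ![3, 4, 8] j) ∧
      (∃ σ : Equiv.Perm (Fin 3),
        ∀ x y z : ℂ, fC C (fun i => ![x, y, z] (σ i)) = x ^ 4 + y ^ 2 * z + x * z ^ 2) ∧
      IsolatedCriticalAtZero (fC C) := by
  refine ⟨chainMatrix 4 2 2, !![1, 1, 2; 1, 2, 3; 1, 1, 3], ?det, ?factorization, ?colSums,
    ⟨Equiv.swap 1 2, fun x y z => ?normalForm⟩,
    isolatedCriticalAtZero_fC_chainMatrix (by simp) two_ne_zero two_ne_zero⟩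
  case det => simp [detZ, det_fin_three]
  case factorization => decide
  case colSums => decide
  case normalForm =>
    have swap_zero : Equiv.swap (1 : Fin 3) 2 0 = 0 := by decide
    simp only [fC_chainMatrix, swap_zero, Equiv.swap_apply_left, Equiv.swap_apply_right,
      cons_val]
    ring
end
end

section
/- For the weight a = (3,4,4) (the weight of the U₁₂-singularity), there exist 3×3 matrices C and D with non-negative integer entries such that |det D| = 1, B_a = C·D, (3,4,4) = (1,1,1)·D, and f_C has an isolated critical point at the origin of ℂ³ (all partial derivatives of f_C vanish at 0, and there is a punctured neighborhood of 0 containing no critical point of f_C); moreover any such C satisfies |det C| = 12. -/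
open Matrix BigOperators

noncomputable section

/-!
Since `B_a = 1 + (1,1,1)ᵀ a` is a rank-one perturbation of the identity, `det B_a = 1 + Σ aⱼ`;
hence `|det C| = 1 + Σ aⱼ` whenever `B_a = C D` with `|det D| = 1`, which is `12` for `a = (3,4,4)`.

For the existence we take `f_C = z⁴ + x²y + xy²`. At a critical point of `f_C` the logarithmic
derivatives `v_k ∂_k f_C` give a linear system with matrix `Cᵀ` for the three monomials of `f_C`.
As `det C ≠ 0`, all three monomials vanish, so `z = 0` and `xy = 0`, and then the partial
derivatives in `x` and `y` force `x = y = 0`.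
-/

lemma detZ_mul (C D : Matrix (Fin 3) (Fin 3) ℕ) : detZ (C * D) = detZ C * detZ D := by
  unfold detZ
  rw [← det_mul]
  exact congrArg det (Matrix.map_mul (f := Nat.castRingHom ℤ))

lemma detZ_Bmat (a : Fin 3 → ℕ) : detZ (Bmat a) = 1 + ∑ i, (a i : ℤ) := by
  have hrank_one : (Bmat a).map (fun n : ℕ ↦ (n : ℤ)) =
      1 + replicateCol Unit (1 : Fin 3 → ℤ) * replicateRow Unit fun j ↦ (a j : ℤ) := by
    ext i j
    simp [Bmat, mul_apply, one_apply, add_comm]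
  rw [detZ, hrank_one, det_one_add_replicateCol_mul_replicateRow, dotProduct_one]

lemma abs_detZ_of_Bmat_eq_mul {a : Fin 3 → ℕ} {C D : Matrix (Fin 3) (Fin 3) ℕ}
    (hD : |detZ D| = 1) (hB : Bmat a = C * D) : |detZ C| = 1 + ∑ i, (a i : ℤ) := by
  calc |detZ C| = |detZ (Bmat a)| := by rw [hB, detZ_mul, abs_mul, hD, mul_one]
    _ = 1 + ∑ i, (a i : ℤ) := by rw [detZ_Bmat, abs_of_nonneg (by positivity)]

lemma fderiv_fC_apply (C : Matrix (Fin 3) (Fin 3) ℕ) (v w : Fin 3 → ℂ) :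
    fderiv ℂ (fC C) v w =
      ∑ i, ∑ k, (∏ j ∈ Finset.univ.erase k, v j ^ C i j) * (C i k * v k ^ (C i k - 1) * w k) := by
  have hmonomial (i : Fin 3) := HasFDerivAt.finsetProd (u := Finset.univ) fun j _ ↦
    (hasFDerivAt_apply (𝕜 := ℂ) (F' := fun _ : Fin 3 ↦ ℂ) j v).pow (C i j)
  have hsum : HasFDerivAt (fC C) _ v := HasFDerivAt.fun_sum fun i _ ↦ hmonomial i
  rw [hsum.fderiv]
  simp

lemma fderiv_fC_single (C : Matrix (Fin 3) (Fin 3) ℕ) (v : Fin 3 → ℂ) (k : Fin 3) (c : ℂ) :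
    fderiv ℂ (fC C) v (Pi.single k c) =
      ∑ i, (∏ j ∈ Finset.univ.erase k, v j ^ C i j) * (C i k * v k ^ (C i k - 1) * c) := by
  rw [fderiv_fC_apply]
  refine Finset.sum_congr rfl fun i _ ↦ ?_
  rw [Finset.sum_eq_single k (fun j _ hj ↦ by simp [hj]) (by simp), Pi.single_eq_same]

lemma fderiv_fC_zero {C : Matrix (Fin 3) (Fin 3) ℕ} (hC : ∀ i, ∑ j, C i j ≠ 1) :
    fderiv ℂ (fC C) 0 = 0 := by
  ext w
  rw [fderiv_fC_apply]
  refine Finset.sum_eq_zero fun i _ ↦ Finset.sum_eq_zero fun k _ ↦ ?_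
  have hdegree := Finset.add_sum_erase Finset.univ (C i) (Finset.mem_univ k)
  rcases eq_or_ne (C i k) 0 with hk | hk
  · simp [hk]
  · have hexponent : ∑ j ∈ Finset.univ.erase k, C i j + (C i k - 1) ≠ 0 := by
      have := hC i
      omega
    simp only [Pi.zero_apply, Finset.prod_pow_eq_pow_sum]
    linear_combination (C i k * w k : ℂ) * zero_pow (M₀ := ℂ) hexponent

lemma fderiv_fC_single_self (C : Matrix (Fin 3) (Fin 3) ℕ) (v : Fin 3 → ℂ) (k : Fin 3) :
    fderiv ℂ (fC C) v (Pi.single k (v k)) = ∑ i, (∏ j, v j ^ C i j) * C i k := by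
  rw [fderiv_fC_single]
  refine Finset.sum_congr rfl fun i _ ↦ ?_
  rw [← Finset.prod_erase_mul _ _ (Finset.mem_univ k)]
  rcases eq_or_ne (C i k) 0 with hk | hk
  · simp [hk]
  · linear_combination (∏ j ∈ Finset.univ.erase k, v j ^ C i j) * C i k * pow_sub_one_mul hk (v k)

lemma prod_pow_eq_zero_of_fderiv_fC_eq_zero {C : Matrix (Fin 3) (Fin 3) ℕ} (hC : detZ C ≠ 0)
    {v : Fin 3 → ℂ} (hv : fderiv ℂ (fC C) v = 0) (i : Fin 3) : ∏ j, v j ^ C i j = 0 := by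
  have hdet : (C.map (Nat.cast : ℕ → ℂ)).det ≠ 0 := by
    have hcast : (C.map (Nat.cast : ℕ → ℂ)).det = (detZ C : ℂ) := by
      rw [detZ, Int.cast_det]
      congr 1
    rw [hcast]
    exact_mod_cast hC
  have hkernel : (fun i ↦ ∏ j, v j ^ C i j) ᵥ* C.map (Nat.cast : ℕ → ℂ) = 0 := by
    ext k
    simpa [hv, vecMul, dotProduct] using (fderiv_fC_single_self C v k).symm
  exact congrFun (eq_zero_of_vecMul_eq_zero hdet hkernel) i

/-- The exponent matrix of `z ^ n + x ^ p * y + x * y ^ q`, the sum of a Fermat and a loop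
polynomial; the rows and columns are ordered so that `n = 4`, `p = q = 2` is compatible with the
weight `(3, 4, 4)`. -/
def fermatLoopMatrix (n p q : ℕ) : Matrix (Fin 3) (Fin 3) ℕ :=
  !![0, 0, n; p, 1, 0; 1, q, 0]

lemma detZ_fermatLoopMatrix (n p q : ℕ) : detZ (fermatLoopMatrix n p q) = n * (p * q - 1) := by
  simp [fermatLoopMatrix, detZ, det_fin_three, mul_sub, mul_assoc]

lemma fderiv_fC_fermatLoopMatrix_single_zero (n p q : ℕ) (v : Fin 3 → ℂ) :
    fderiv ℂ (fC (fermatLoopMatrix n p q)) v (Pi.single 0 1) =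
      v 1 * (p * v 0 ^ (p - 1)) + v 1 ^ q := by
  have herase : (Finset.univ.erase 0 : Finset (Fin 3)) = {1, 2} := by decide
  rw [fderiv_fC_single, herase]
  simp [fermatLoopMatrix, Fin.sum_univ_three]

lemma fderiv_fC_fermatLoopMatrix_single_one (n p q : ℕ) (v : Fin 3 → ℂ) :
    fderiv ℂ (fC (fermatLoopMatrix n p q)) v (Pi.single 1 1) =
      v 0 ^ p + v 0 * (q * v 1 ^ (q - 1)) := by
  have herase : (Finset.univ.erase 1 : Finset (Fin 3)) = {0, 2} := by decide
  rw [fderiv_fC_single, herase]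
  simp [fermatLoopMatrix, Fin.sum_univ_three]

lemma eq_zero_of_fderiv_fC_fermatLoopMatrix_eq_zero {n p q : ℕ} (hn : n ≠ 0) (hp : 2 ≤ p)
    (hq : 2 ≤ q) {v : Fin 3 → ℂ} (hv : fderiv ℂ (fC (fermatLoopMatrix n p q)) v = 0) : v = 0 := by
  have hdet : detZ (fermatLoopMatrix n p q) ≠ 0 := by
    rw [detZ_fermatLoopMatrix]
    have hpq : (1 : ℤ) < p * q := by exact_mod_cast (by nlinarith : 1 < p * q)
    exact mul_ne_zero (mod_cast hn) (sub_ne_zero.2 hpq.ne')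
  have hmonomial := prod_pow_eq_zero_of_fderiv_fC_eq_zero hdet hv
  have hz : v 2 = 0 := by
    simpa [fermatLoopMatrix, Fin.prod_univ_three, hn] using hmonomial 0
  have hxy : v 0 = 0 ∨ v 1 = 0 := by
    simpa [fermatLoopMatrix, Fin.prod_univ_three, show p ≠ 0 by omega] using hmonomial 1
  have hdx : v 1 * (p * v 0 ^ (p - 1)) + v 1 ^ q = 0 := by
    simpa [hv] using (fderiv_fC_fermatLoopMatrix_single_zero n p q v).symm
  have hdy : v 0 ^ p + v 0 * (q * v 1 ^ (q - 1)) = 0 := by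
    simpa [hv] using (fderiv_fC_fermatLoopMatrix_single_one n p q v).symm
  have hx_iff_hy : v 0 = 0 ↔ v 1 = 0 := by
    constructor <;> intro h
    · simpa [h, show p - 1 ≠ 0 by omega, show q ≠ 0 by omega] using hdx
    · simpa [h, show q - 1 ≠ 0 by omega, show p ≠ 0 by omega] using hdy
  ext i
  fin_cases i
  · exact hxy.elim id hx_iff_hy.2
  · exact hxy.elim hx_iff_hy.1 id
  · exact hz

lemma isolatedCriticalAtZero_fC_fermatLoopMatrix {n p q : ℕ} (hn : 2 ≤ n) (hp : 2 ≤ p)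
    (hq : 2 ≤ q) : IsolatedCriticalAtZero (fC (fermatLoopMatrix n p q)) := by
  have hdegree (i : Fin 3) : ∑ j, fermatLoopMatrix n p q i j ≠ 1 := by
    fin_cases i <;> simp [fermatLoopMatrix, Fin.sum_univ_three] <;> omega
  exact ⟨fderiv_fC_zero hdegree, 1, one_pos, fun v hv_ne _ hv ↦
    hv_ne (eq_zero_of_fderiv_fC_fermatLoopMatrix_eq_zero (by omega) hp hq hv)⟩

theorem stmt_19_general :
    (∃ C D : Matrix (Fin 3) (Fin 3) ℕ,
      |detZ D| = 1 ∧
      Bmat ![3, 4, 4] = C * D ∧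
      (∀ j, (∑ i : Fin 3, D i j) = ![3, 4, 4] j) ∧
      IsolatedCriticalAtZero (fC C)) ∧
    (∀ (a : Fin 3 → ℕ) (C D : Matrix (Fin 3) (Fin 3) ℕ),
      |detZ D| = 1 →
      Bmat a = C * D →
      |detZ C| = 1 + ∑ i, (a i : ℤ)) := by
  refine ⟨⟨fermatLoopMatrix 4 2 2, !![1, 2, 1; 1, 1, 2; 1, 1, 1], ?_, ?_, ?_, ?_⟩,
    fun _ _ _ ↦ abs_detZ_of_Bmat_eq_mul⟩
  · simp [detZ, det_fin_three]
  · decide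
  · decide
  · exact isolatedCriticalAtZero_fC_fermatLoopMatrix (by norm_num) le_rfl le_rfl

theorem stmt_19 :
    (∃ C D : Matrix (Fin 3) (Fin 3) ℕ,
      |detZ D| = 1 ∧
      Bmat ![3, 4, 4] = C * D ∧
      (∀ j, (∑ i : Fin 3, D i j) = ![3, 4, 4] j) ∧
      IsolatedCriticalAtZero (fC C)) ∧
    (∀ C D : Matrix (Fin 3) (Fin 3) ℕ,
      |detZ D| = 1 →
      Bmat ![3, 4, 4] = C * D →
      (∀ j, (∑ i : Fin 3, D i j) = ![3, 4, 4] j) →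
      IsolatedCriticalAtZero (fC C) →
      |detZ C| = 12) := by
  refine ⟨stmt_19_general.1, fun C D hD hB _ _ ↦ ?_⟩
  simpa [Fin.sum_univ_three] using stmt_19_general.2 _ C D hD hB
end
end
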